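/- arXiv:0908.3829 — 2 statements merged into one kernel-verified Lean document; each statement's English description precedes it below -/
import Mathlib

section
/- Let b ≥ 1, η > 0, and ψ : [0,∞) → [0,∞) be a decreasing smooth function with -η ≤ ψ'(s) ≤ 0, A := ∫₀^∞ s^{b-1}ψ(s) ds > 0, and suppose ψ(0)^{(2b+2)/b} / (6bη²(bA)^{2/b}) < d for some constant d < 1. Then ∫₀^∞ s^{b+3} ψ(s) ds ≥ (1/(b+4))(bA)^{(b+4)/b} ψ(0)^{-4/b} + (1/(3b(b+4)η²) - d/(6(b+2)²(b+4)η²)) (bA)^{(b+2)/b} ψ(0)^{(2b-2)/b} + (1/(36b(b+4)η⁴) - d/(36(b+2)²(b+4)η⁴)) A ψ(0)⁴. -/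
open MeasureTheory Set

open Filter Topology

/-!
Write `P = ψ 0 = ∫ -ψ'` and let `m c = ∫ s ^ c * -ψ' s`, so that integration by parts gives
`m c = c * ∫ s ^ (c - 1) * ψ s`. If `m c = P * t ^ c`, then weighted AM-GM bounds
`c * m (c + 2) - c * t ^ 2 * m c` from below by `2 * t ^ c * ∫ (s - t) ^ 2 * -ψ' s`. Because
`-ψ' ≤ η`, this last integral is smallest when the mass `P` fills an interval centred at `t` with
height `η`, which gives `P ^ 3 / (12 * η ^ 2)`. Passing in this way from `m b` to `m (b + 2)` and
then to `m (b + 4)`, and expanding the power `(1 + e) ^ (2 / (b + 2))` that appears in between to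
second order in `e = P ^ 2 / (6 * b * η ^ 2 * t ^ 2)`, yields the estimate.
-/

lemma exists_pos_rpow_eq {c x : ℝ} (hc : c ≠ 0) (hx : 0 < x) : ∃ t, 0 < t ∧ t ^ c = x :=
  ⟨x ^ c⁻¹, by positivity, Real.rpow_inv_rpow hx.le hc⟩

lemma rpow_mul_rpow_le_weighted_add {a b s t : ℝ} (ha : 0 ≤ a) (hb : 0 ≤ b) (hab : 0 < a + b)
    (hs : 0 ≤ s) (ht : 0 ≤ t) :
    s ^ a * t ^ b ≤ a / (a + b) * s ^ (a + b) + b / (a + b) * t ^ (a + b) := by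
  have h := Real.geom_mean_le_arith_mean2_weighted (div_nonneg ha hab.le) (div_nonneg hb hab.le)
    (Real.rpow_nonneg hs (a + b)) (Real.rpow_nonneg ht (a + b))
    (by rw [← add_div, div_self hab.ne'])
  rwa [← Real.rpow_mul hs, ← Real.rpow_mul ht, mul_div_cancel₀ _ hab.ne',
    mul_div_cancel₀ _ hab.ne'] at h

lemma two_mul_rpow_mul_sub_sq_le {c s t : ℝ} (hc : 1 ≤ c) (hs : 0 ≤ s) (ht : 0 ≤ t) :
    2 * t ^ c * (s - t) ^ 2 ≤ c * s ^ (c + 2) - (c + 2) * t ^ 2 * s ^ c + 2 * t ^ (c + 2) := by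
  have amgm_sq := rpow_mul_rpow_le_weighted_add (sub_nonneg.2 hc) zero_le_two (by linarith) hs ht
  have amgm_one := rpow_mul_rpow_le_weighted_add zero_le_one (by linarith : 0 ≤ c) (by linarith)
    hs ht
  rw [show c - 1 + 2 = c + 1 by ring, Real.rpow_two] at amgm_sq
  rw [add_comm 1 c, Real.rpow_one] at amgm_one
  have degree_lowered : (c + 2) * (s ^ (c - 1) * t ^ 2) + 2 * (s * t ^ c) ≤
      c * s ^ (c + 1) + 4 * t ^ (c + 1) := by
    calc (c + 2) * (s ^ (c - 1) * t ^ 2) + 2 * (s * t ^ c)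
        ≤ (c + 2) * ((c - 1) / (c + 1) * s ^ (c + 1) + 2 / (c + 1) * t ^ (c + 1)) +
          2 * (1 / (c + 1) * s ^ (c + 1) + c / (c + 1) * t ^ (c + 1)) := by gcongr
      _ = c * s ^ (c + 1) + 4 * t ^ (c + 1) := by
        have : c + 1 ≠ 0 := by linarith
        field_simp
        ring
  have hs_pow : s ^ c = s ^ (c - 1) * s := by
    rw [← Real.rpow_add_one' hs (by linarith), sub_add_cancel]
  have pow_add_one {x : ℝ} (hx : 0 ≤ x) : x ^ (c + 1) = x ^ c * x :=
    Real.rpow_add_one' hx (by linarith)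
  have pow_add_two {x : ℝ} (hx : 0 ≤ x) : x ^ (c + 2) = x ^ c * x ^ 2 := by
    rw [Real.rpow_add' hx (by linarith), Real.rpow_two]
  have := mul_le_mul_of_nonneg_right degree_lowered hs
  rw [pow_add_one hs, pow_add_one ht] at this
  rw [pow_add_two hs, pow_add_two ht]
  linear_combination this + (c + 2) * t ^ 2 * hs_pow

lemma one_sub_mul_le_rpow_one_add {p x : ℝ} (hp : p ≤ 1) (hx : -1 < x) :
    1 - (1 - p) * x ≤ (1 + x) ^ (p - 1) := by
  have hpos : 0 < 1 + x := by linarith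
  have hlog : Real.log (1 + x) ≤ x := by linarith [Real.log_le_sub_one_of_pos hpos]
  rw [Real.rpow_def_of_pos hpos]
  nlinarith [Real.add_one_le_exp (Real.log (1 + x) * (p - 1))]

lemma one_add_mul_sub_sq_le_rpow_one_add {p x : ℝ} (hp0 : 0 ≤ p) (hp1 : p ≤ 1) (hx : 0 ≤ x) :
    1 + p * x - p * (1 - p) / 2 * x ^ 2 ≤ (1 + x) ^ p := by
  set gap : ℝ → ℝ := fun y => (1 + y) ^ p - (1 + p * y - p * (1 - p) / 2 * y ^ 2) with hgap
  have hderiv : ∀ y ∈ interior (Ici (0 : ℝ)),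
      HasDerivAt gap (p * ((1 + y) ^ (p - 1) - (1 - (1 - p) * y))) y := by
    intro y hy
    rw [interior_Ici, mem_Ioi] at hy
    have hpow := ((hasDerivAt_id y).const_add 1).rpow_const (p := p) (Or.inl (by simp; linarith))
    have hpoly := (((hasDerivAt_id y).const_mul p).const_add 1).sub
      (((hasDerivAt_id y).pow 2).const_mul (p * (1 - p) / 2))
    refine (hpow.sub hpoly).congr_deriv ?_
    simp only [id_eq]
    ring
  have hmono : MonotoneOn gap (Ici 0) := by
    refine monotoneOn_of_hasDerivWithinAt_nonneg (convex_Ici 0) ?_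
      (fun y hy => (hderiv y hy).hasDerivWithinAt) fun y hy => ?_
    · exact ((by fun_prop : ContinuousOn (fun y : ℝ => 1 + y) _).rpow_const
        fun _ _ => Or.inr hp0).sub (by fun_prop)
    · rw [interior_Ici, mem_Ioi] at hy
      exact mul_nonneg hp0 (sub_nonneg.2 (one_sub_mul_le_rpow_one_add hp1 (by linarith)))
  have h := hmono self_mem_Ici hx hx
  simp only [hgap, add_zero, mul_zero, Real.one_rpow, zero_pow two_ne_zero, sub_zero, sub_self,
    sub_nonneg] at h
  exact h

lemma integrable_max_sq_sub_sq (r t : ℝ) : Integrable fun x : ℝ => max (r ^ 2 - (x - t) ^ 2) 0 := by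
  refine Continuous.integrable_of_hasCompactSupport (by fun_prop)
    (HasCompactSupport.intro (isCompact_Icc (a := t - |r|) (b := t + |r|)) fun x hx => ?_)
  have hfar : |r| ≤ |x - t| := by
    by_contra! h
    exact hx ⟨by linarith [(abs_lt.1 h).1], by linarith [(abs_lt.1 h).2]⟩
  exact max_eq_right (sub_nonpos.2 (sq_le_sq.2 hfar))

lemma integral_max_sq_sub_sq {r : ℝ} (hr : 0 ≤ r) (t : ℝ) :
    ∫ x, max (r ^ 2 - (x - t) ^ 2) 0 = 4 / 3 * r ^ 3 := by
  have hindicator : (fun x : ℝ => max (r ^ 2 - x ^ 2) 0) =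
      (Icc (-r) r).indicator fun x => r ^ 2 - x ^ 2 := by
    funext x
    by_cases hx : x ∈ Icc (-r) r
    · rw [indicator_of_mem hx, max_eq_left (sub_nonneg.2 (sq_le_sq' hx.1 hx.2))]
    · rw [indicator_of_notMem hx, max_eq_right]
      rw [mem_Icc, ← abs_le, not_le] at hx
      exact sub_nonpos.2 (sq_le_sq.2 (by rw [abs_of_nonneg hr]; exact hx.le))
  rw [integral_sub_right_eq_self (fun x : ℝ => max (r ^ 2 - x ^ 2) 0) t, hindicator,
    integral_indicator measurableSet_Icc, integral_Icc_eq_integral_Ioc,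
    ← intervalIntegral.integral_of_le (by linarith),
    intervalIntegral.integral_sub (by simp) (by simp), intervalIntegral.integral_const,
    integral_pow, smul_eq_mul]
  ring

lemma integral_pow_three_div_le_integral_sub_sq_mul {S : Set ℝ} {h : ℝ → ℝ} {η : ℝ}
    (hS : MeasurableSet S) (hη : 0 < η) (hh : ∀ s ∈ S, h s ∈ Icc 0 η) (t : ℝ)
    (hint : IntegrableOn h S) (hint_sq : IntegrableOn (fun s => (s - t) ^ 2 * h s) S) :
    (∫ s in S, h s) ^ 3 / (12 * η ^ 2) ≤ ∫ s in S, (s - t) ^ 2 * h s := by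
  set P := ∫ s in S, h s with hP
  have hP0 : 0 ≤ P := setIntegral_nonneg hS fun s hs => (hh s hs).1
  -- The optimal competitor has density `η` on `[t - r, t + r]`, hence mass `2 * r * η = P`.
  set r := P / (2 * η) with hr
  set k : ℝ → ℝ := fun s => max (r ^ 2 - (s - t) ^ 2) 0
  have hk : Integrable k := integrable_max_sq_sub_sq r t
  have pointwise : ∀ s ∈ S, r ^ 2 * h s - (s - t) ^ 2 * h s ≤ η * k s := fun s hs =>
    calc r ^ 2 * h s - (s - t) ^ 2 * h s = h s * (r ^ 2 - (s - t) ^ 2) := by ring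
      _ ≤ h s * k s := mul_le_mul_of_nonneg_left (le_max_left _ _) (hh s hs).1
      _ ≤ η * k s := mul_le_mul_of_nonneg_right (hh s hs).2 (le_max_right _ _)
  have integrated := setIntegral_mono_on ((hint.const_mul (r ^ 2)).sub hint_sq)
    (hk.integrableOn.const_mul η) hS pointwise
  rw [integral_sub' (hint.const_mul (r ^ 2)) hint_sq, integral_const_mul, integral_const_mul,
    ← hP] at integrated
  have hk_le : ∫ s in S, k s ≤ 4 / 3 * r ^ 3 :=
    (setIntegral_le_integral hk (.of_forall fun _ => le_max_right _ _)).trans_eq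
      (integral_max_sq_sub_sq (by positivity) t)
  calc P ^ 3 / (12 * η ^ 2) = r ^ 2 * P - η * (4 / 3 * r ^ 3) := by rw [hr]; field_simp; ring
    _ ≤ r ^ 2 * P - η * ∫ s in S, k s := by gcongr
    _ ≤ ∫ s in S, (s - t) ^ 2 * h s := by linarith

lemma integrableOn_rpow_mul_of_le {f : ℝ → ℝ} {p q : ℝ} (hp : 0 ≤ p) (hpq : p ≤ q)
    (hf : IntegrableOn f (Ioi 0)) (hq : IntegrableOn (fun s => s ^ q * f s) (Ioi 0)) :
    IntegrableOn (fun s => s ^ p * f s) (Ioi 0) := by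
  refine (hf.norm.add hq.norm).mono' ?_ ((ae_restrict_iff' measurableSet_Ioi).2 (.of_forall ?_))
  · exact (measurable_id.pow_const p).aestronglyMeasurable.mul hf.aestronglyMeasurable
  · intro s (hs : 0 < s)
    have hpow : s ^ p ≤ 1 + s ^ q := by
      rcases le_total s 1 with hs1 | hs1
      · linarith [Real.rpow_le_one hs.le hs1 hp, Real.rpow_nonneg hs.le q]
      · linarith [Real.rpow_le_rpow_of_exponent_le hs1 hpq]
    rw [norm_mul, Real.norm_of_nonneg (by positivity), Pi.add_apply, norm_mul (s ^ q),
      Real.norm_of_nonneg (by positivity : 0 ≤ s ^ q), ← one_add_mul]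
    gcongr

lemma rpow_add_four_mul_le {b e t u : ℝ} (hb : 0 ≤ b) (he : 0 ≤ e) (ht : 0 ≤ t) (hu : 0 ≤ u)
    (htu : t ^ (b + 2) * (1 + e) ≤ u ^ (b + 2)) :
    t ^ (b + 4) * ((1 + e) * (1 + e - b / (b + 2) ^ 2 * e ^ 2)) ≤
      u ^ (b + 2) * (u ^ 2 + b / (b + 2) * e * t ^ 2) := by
  have hsq : t ^ 2 * (1 + e) ^ (2 / (b + 2)) ≤ u ^ 2 := by
    have := Real.rpow_le_rpow (by positivity) htu (by positivity : 0 ≤ 2 / (b + 2))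
    rwa [Real.mul_rpow (by positivity) (by positivity), ← Real.rpow_mul ht, ← Real.rpow_mul hu,
      mul_div_cancel₀ _ (by linarith : b + 2 ≠ 0), Real.rpow_two, Real.rpow_two] at this
  have bernoulli : 1 + 2 / (b + 2) * e - b / (b + 2) ^ 2 * e ^ 2 ≤ (1 + e) ^ (2 / (b + 2)) := by
    convert one_add_mul_sub_sq_le_rpow_one_add (p := 2 / (b + 2)) (by positivity)
      ((div_le_one (by positivity)).2 (by linarith)) he using 3
    field_simp
    ring
  have second_factor :
      t ^ 2 * (1 + e - b / (b + 2) ^ 2 * e ^ 2) ≤ u ^ 2 + b / (b + 2) * e * t ^ 2 :=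
    calc t ^ 2 * (1 + e - b / (b + 2) ^ 2 * e ^ 2)
        = t ^ 2 * (1 + 2 / (b + 2) * e - b / (b + 2) ^ 2 * e ^ 2) + b / (b + 2) * e * t ^ 2 := by
          field_simp
          ring
      _ ≤ t ^ 2 * (1 + e) ^ (2 / (b + 2)) + b / (b + 2) * e * t ^ 2 := by gcongr
      _ ≤ u ^ 2 + b / (b + 2) * e * t ^ 2 := by gcongr
  calc t ^ (b + 4) * ((1 + e) * (1 + e - b / (b + 2) ^ 2 * e ^ 2))
      = t ^ (b + 2) * (1 + e) * (t ^ 2 * (1 + e - b / (b + 2) ^ 2 * e ^ 2)) := by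
        rw [show b + 4 = b + 2 + 2 by ring, Real.rpow_add' ht (by linarith), Real.rpow_two]
        ring
    _ ≤ t ^ (b + 2) * (1 + e) * (u ^ 2 + b / (b + 2) * e * t ^ 2) := by gcongr
    _ ≤ u ^ (b + 2) * (u ^ 2 + b / (b + 2) * e * t ^ 2) := by gcongr

section BoundedDensity

variable {h : ℝ → ℝ} {η t : ℝ}

lemma mul_rpow_add_two_add_le_integral {c : ℝ} (hc : 1 ≤ c) (hη : 0 < η) (ht : 0 ≤ t)
    (hh : ∀ s ∈ Ioi 0, h s ∈ Icc 0 η) (hint : IntegrableOn h (Ioi 0))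
    (hint_add_two : IntegrableOn (fun s => s ^ (c + 2) * h s) (Ioi 0))
    (hmoment : ∫ s in Ioi 0, s ^ c * h s = (∫ s in Ioi 0, h s) * t ^ c) :
    (∫ s in Ioi 0, h s) * t ^ (c + 2) + (∫ s in Ioi 0, h s) ^ 3 * t ^ c / (6 * c * η ^ 2) ≤
      ∫ s in Ioi 0, s ^ (c + 2) * h s := by
  have hint_rpow {p : ℝ} (hp : 0 ≤ p) (hpc : p ≤ c + 2) :
      IntegrableOn (fun s => s ^ p * h s) (Ioi 0) :=
    integrableOn_rpow_mul_of_le hp hpc hint hint_add_two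
  have hint_c := hint_rpow (p := c) (by linarith) (by linarith)
  have hint_sq : IntegrableOn (fun s => (s - t) ^ 2 * h s) (Ioi 0) := by
    refine IntegrableOn.congr_fun ((((hint_rpow (p := 2) (by linarith) (by linarith)).sub
      ((hint_rpow (p := 1) (by linarith) (by linarith)).const_mul (2 * t))).add
      (hint.const_mul (t ^ 2)))) (fun s _ => ?_) measurableSet_Ioi
    simp only [Pi.add_apply, Pi.sub_apply, Real.rpow_two, Real.rpow_one]
    ring
  have hint_diff := (hint_add_two.const_mul c).sub (hint_c.const_mul ((c + 2) * t ^ 2))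
  have integrated := setIntegral_mono_on (hint_sq.const_mul (2 * t ^ c))
    (hint_diff.add (hint.const_mul (2 * t ^ (c + 2)))) measurableSet_Ioi
    fun s (hs : 0 < s) => by
      have := mul_le_mul_of_nonneg_right (two_mul_rpow_mul_sub_sq_le hc hs.le ht) (hh s hs).1
      simp only [Pi.add_apply, Pi.sub_apply]
      linarith
  rw [integral_add' hint_diff (hint.const_mul _), integral_sub' (hint_add_two.const_mul c)
    (hint_c.const_mul _)] at integrated
  simp only [integral_const_mul, hmoment] at integrated
  have variance := mul_le_mul_of_nonneg_left (integral_pow_three_div_le_integral_sub_sq_mul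
    measurableSet_Ioi hη hh t hint hint_sq) (by positivity : 0 ≤ 2 * t ^ c)
  have hpow : t ^ (c + 2) = t ^ c * t ^ 2 := by
    rw [Real.rpow_add' ht (by linarith), Real.rpow_two]
  refine le_of_mul_le_mul_left ?_ (by linarith : 0 < c)
  rw [hpow] at integrated ⊢
  set P := ∫ s in Ioi 0, h s
  calc c * (P * (t ^ c * t ^ 2) + P ^ 3 * t ^ c / (6 * c * η ^ 2))
      = c * P * t ^ c * t ^ 2 + 2 * t ^ c * (P ^ 3 / (12 * η ^ 2)) := by field_simp; ring
    _ ≤ c * ∫ s in Ioi 0, s ^ (c + 2) * h s := by linarith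

lemma mul_rpow_add_four_mul_le_integral {b e P : ℝ} (hb : 1 ≤ b) (hη : 0 < η) (ht : 0 < t)
    (hP : 0 < P) (he : e = P ^ 2 / (6 * b * η ^ 2 * t ^ 2))
    (hh : ∀ s ∈ Ioi 0, h s ∈ Icc 0 η) (hint : IntegrableOn h (Ioi 0))
    (hint_add_four : IntegrableOn (fun s => s ^ (b + 4) * h s) (Ioi 0))
    (hmass : ∫ s in Ioi 0, h s = P) (hmoment : ∫ s in Ioi 0, s ^ b * h s = P * t ^ b) :
    P * (t ^ (b + 4) * ((1 + e) * (1 + e - b / (b + 2) ^ 2 * e ^ 2))) ≤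
      ∫ s in Ioi 0, s ^ (b + 4) * h s := by
  have he0 : 0 ≤ e := by rw [he]; positivity
  have hint_add_two : IntegrableOn (fun s => s ^ (b + 2) * h s) (Ioi 0) :=
    integrableOn_rpow_mul_of_le (by linarith) (by linarith) hint hint_add_four
  have moment_add_two_bound : P * (t ^ (b + 2) * (1 + e)) ≤ ∫ s in Ioi 0, s ^ (b + 2) * h s := by
    have := mul_rpow_add_two_add_le_integral hb hη ht.le hh hint hint_add_two
      (by rw [hmass, hmoment])
    rw [hmass] at this
    refine le_of_eq_of_le ?_ this
    rw [Real.rpow_add ht, Real.rpow_two, he]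
    field_simp
  obtain ⟨u, hu, hu_pow⟩ := exists_pos_rpow_eq (by linarith : b + 2 ≠ 0)
    (div_pos ((by positivity : 0 < P * (t ^ (b + 2) * (1 + e))).trans_le moment_add_two_bound) hP)
  have hmoment_add_two : ∫ s in Ioi 0, s ^ (b + 2) * h s = P * u ^ (b + 2) := by
    rw [hu_pow, mul_div_cancel₀ _ hP.ne']
  rw [hmoment_add_two] at moment_add_two_bound
  have moment_add_four_bound :=
    mul_rpow_add_two_add_le_integral (by linarith : 1 ≤ b + 2) hη hu.le hh hint
      (by rwa [add_assoc, show (2 : ℝ) + 2 = 4 by norm_num]) (by rw [hmass, hmoment_add_two])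
  rw [hmass, add_assoc b, show (2 : ℝ) + 2 = 4 by norm_num] at moment_add_four_bound
  calc P * (t ^ (b + 4) * ((1 + e) * (1 + e - b / (b + 2) ^ 2 * e ^ 2)))
      ≤ P * (u ^ (b + 2) * (u ^ 2 + b / (b + 2) * e * t ^ 2)) :=
        mul_le_mul_of_nonneg_left (rpow_add_four_mul_le (by linarith) he0 ht.le hu.le
          (le_of_mul_le_mul_left moment_add_two_bound hP)) hP.le
    _ = P * u ^ (b + 4) + P ^ 3 * u ^ (b + 2) / (6 * (b + 2) * η ^ 2) := by
        rw [show b + 4 = b + 2 + 2 by ring, Real.rpow_add hu (b + 2), Real.rpow_two, he]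
        field_simp
    _ ≤ ∫ s in Ioi 0, s ^ (b + 4) * h s := moment_add_four_bound

end BoundedDensity

lemma tendsto_rpow_mul_atTop_zero_of_antitoneOn {ψ : ℝ → ℝ} {c : ℝ} (hc : 0 < c)
    (hnn : ∀ s ∈ Ioi 0, 0 ≤ ψ s) (hanti : AntitoneOn ψ (Ioi 0))
    (hint : IntegrableOn (fun s => s ^ (c - 1) * ψ s) (Ioi 0)) :
    Tendsto (fun s => s ^ c * ψ s) atTop (𝓝 0) := by
  set F : ℝ → ℝ := fun s => ∫ x in (0 : ℝ)..s, x ^ (c - 1) * ψ x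
  have hF := intervalIntegral_tendsto_integral_Ioi 0 hint tendsto_id
  have hF_sub : Tendsto (fun s => F s - F (s / 2)) atTop (𝓝 0) := by
    rw [← sub_self (∫ x in Ioi 0, x ^ (c - 1) * ψ x)]
    exact hF.sub (hF.comp (tendsto_id.atTop_div_const zero_lt_two))
  set K := (1 - (1 / 2 : ℝ) ^ c) / c
  have hK : 0 < K :=
    div_pos (sub_pos.2 (Real.rpow_lt_one (by norm_num) (by norm_num) hc)) hc
  have hbound : ∀ s > 0, K * (s ^ c * ψ s) ≤ F s - F (s / 2) := by
    intro s hs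
    have hinterval {x : ℝ} (hx : 0 < x) :
        IntervalIntegrable (fun y => y ^ (c - 1) * ψ y) volume 0 x :=
      (intervalIntegrable_iff_integrableOn_Ioc_of_le hx.le).2 (hint.mono_set Ioc_subset_Ioi_self)
    calc K * (s ^ c * ψ s) = ∫ x in (s / 2)..s, x ^ (c - 1) * ψ s := by
          rw [intervalIntegral.integral_mul_const, integral_rpow (Or.inl (by linarith)),
            sub_add_cancel, div_eq_mul_one_div s, Real.mul_rpow hs.le (by norm_num)]
          ring
      _ ≤ ∫ x in (s / 2)..s, x ^ (c - 1) * ψ x := by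
          refine intervalIntegral.integral_mono_on (by linarith)
            ((intervalIntegral.intervalIntegrable_rpow' (by linarith)).mul_const _)
            ((hinterval (half_pos hs)).symm.trans (hinterval hs)) fun x hx => ?_
          have hx0 : 0 < x := (half_pos hs).trans_le hx.1
          gcongr
          exact hanti hx0 hs hx.2
      _ = F s - F (s / 2) :=
          (intervalIntegral.integral_interval_sub_left (hinterval hs)
            (hinterval (half_pos hs))).symm
  refine squeeze_zero' (g := fun s => K⁻¹ * (F s - F (s / 2))) ?_ ?_
    (by simpa only [mul_zero] using hF_sub.const_mul K⁻¹)
  · filter_upwards [eventually_gt_atTop 0] with s hs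
    exact mul_nonneg (by positivity) (hnn s hs)
  · filter_upwards [eventually_gt_atTop 0] with s hs
    exact (le_inv_mul_iff₀ hK).2 (hbound s hs)

lemma integrableOn_and_integral_eq_of_hasDerivAt_sub {Φ f g : ℝ → ℝ} {a m : ℝ}
    (hcont : ContinuousWithinAt Φ (Ici a) a)
    (hderiv : ∀ x ∈ Ioi a, HasDerivAt Φ (f x - g x) x) (hf : IntegrableOn f (Ioi a))
    (hfcont : ContinuousOn f (Ioi a)) (hg : ∀ x ∈ Ioi a, 0 ≤ g x) (hlim : Tendsto Φ atTop (𝓝 m)) :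
    IntegrableOn g (Ioi a) ∧ ∫ x in Ioi a, g x = (∫ x in Ioi a, f x) - (m - Φ a) := by
  set F : ℝ → ℝ := fun x => ∫ y in a..x, f y with hF
  have hinterval {x : ℝ} (hx : a < x) : IntervalIntegrable f volume a x :=
    (intervalIntegrable_iff_integrableOn_Ioc_of_le hx.le).2 (hf.mono_set Ioc_subset_Ioi_self)
  have hFcont : ContinuousWithinAt F (Ici a) a := by
    refine ContinuousWithinAt.mono_of_mem_nhdsWithin
      (intervalIntegral.continuousOn_primitive_interval' (hinterval (lt_add_one a)) left_mem_uIcc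
        a left_mem_uIcc) ?_
    rw [uIcc_of_le (by linarith)]
    exact Icc_mem_nhdsGE (lt_add_one a)
  have hFderiv : ∀ x ∈ Ioi a, HasDerivAt F (f x) x := fun x hx =>
    intervalIntegral.integral_hasDerivAt_right (hinterval hx)
      (hfcont.stronglyMeasurableAtFilter isOpen_Ioi x hx) (hfcont.continuousAt (Ioi_mem_nhds hx))
  have hGcont := hFcont.sub hcont
  have hGderiv : ∀ x ∈ Ioi a, HasDerivAt (F - Φ) (g x) x := fun x hx =>
    ((hFderiv x hx).sub (hderiv x hx)).congr_deriv (sub_sub_cancel _ _)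
  have hGlim : Tendsto (F - Φ) atTop (𝓝 ((∫ x in Ioi a, f x) - m)) :=
    (intervalIntegral_tendsto_integral_Ioi a hf tendsto_id).sub hlim
  refine ⟨integrableOn_Ioi_deriv_of_nonneg hGcont hGderiv hg hGlim, ?_⟩
  rw [integral_Ioi_of_hasDerivAt_of_nonneg hGcont hGderiv hg hGlim]
  simp only [Pi.sub_apply, hF, intervalIntegral.integral_same]
  ring

section DecreasingProfile

variable {ψ ψ' : ℝ → ℝ} {c : ℝ}

lemma antitoneOn_Ici_of_hasDerivAt_nonpos {a : ℝ} (hcont : ContinuousOn ψ (Ici a))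
    (hderiv : ∀ s ∈ Ioi a, HasDerivAt ψ (ψ' s) s) (hψ' : ∀ s ∈ Ioi a, ψ' s ≤ 0) :
    AntitoneOn ψ (Ici a) := by
  rw [← interior_Ici] at hderiv hψ'
  exact antitoneOn_of_hasDerivWithinAt_nonpos (convex_Ici a) hcont
    (fun s hs => (hderiv s hs).hasDerivWithinAt) hψ'

lemma integrableOn_and_integral_rpow_mul_neg_deriv (hc : 0 < c) (hcont : ContinuousOn ψ (Ici 0))
    (hderiv : ∀ s ∈ Ioi 0, HasDerivAt ψ (ψ' s) s) (hnn : ∀ s ∈ Ioi 0, 0 ≤ ψ s)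
    (hψ' : ∀ s ∈ Ioi 0, ψ' s ≤ 0) (hint : IntegrableOn (fun s => s ^ (c - 1) * ψ s) (Ioi 0)) :
    IntegrableOn (fun s => s ^ c * -ψ' s) (Ioi 0) ∧
      ∫ s in Ioi 0, s ^ c * -ψ' s = c * ∫ s in Ioi 0, s ^ (c - 1) * ψ s := by
  have hanti := (antitoneOn_Ici_of_hasDerivAt_nonpos hcont hderiv hψ').mono Ioi_subset_Ici_self
  have hprod_cont : ContinuousWithinAt (fun s => s ^ c * ψ s) (Ici 0) 0 :=
    (Real.continuousAt_rpow_const 0 c (Or.inr hc.le)).continuousWithinAt.mul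
      (hcont 0 self_mem_Ici)
  have hprod_deriv : ∀ s ∈ Ioi 0, HasDerivAt (fun s => s ^ c * ψ s)
      (c * (s ^ (c - 1) * ψ s) - s ^ c * -ψ' s) s := fun s hs =>
    ((Real.hasDerivAt_rpow_const (Or.inl (mem_Ioi.1 hs).ne')).mul (hderiv s hs)).congr_deriv
      (by ring)
  have hfcont : ContinuousOn (fun s => c * (s ^ (c - 1) * ψ s)) (Ioi 0) :=
    continuousOn_const.mul ((continuousOn_id.rpow_const fun s hs => Or.inl (mem_Ioi.1 hs).ne').mul
      (hcont.mono Ioi_subset_Ici_self))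
  have hparts := integrableOn_and_integral_eq_of_hasDerivAt_sub hprod_cont hprod_deriv
    (hint.const_mul c) hfcont
    (fun s hs => mul_nonneg (Real.rpow_nonneg (mem_Ioi.1 hs).le c) (neg_nonneg.2 (hψ' s hs)))
    (tendsto_rpow_mul_atTop_zero_of_antitoneOn hc hnn hanti hint)
  simpa only [integral_const_mul, Real.zero_rpow hc.ne', zero_mul, sub_zero] using hparts

lemma integrableOn_and_integral_neg_deriv (hc : 0 < c) (hcont : ContinuousOn ψ (Ici 0))
    (hderiv : ∀ s ∈ Ioi 0, HasDerivAt ψ (ψ' s) s) (hnn : ∀ s ∈ Ioi 0, 0 ≤ ψ s)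
    (hψ' : ∀ s ∈ Ioi 0, ψ' s ≤ 0) (hint : IntegrableOn (fun s => s ^ (c - 1) * ψ s) (Ioi 0)) :
    IntegrableOn (fun s => -ψ' s) (Ioi 0) ∧ ∫ s in Ioi 0, -ψ' s = ψ 0 := by
  have hanti := (antitoneOn_Ici_of_hasDerivAt_nonpos hcont hderiv hψ').mono Ioi_subset_Ici_self
  have hlim : Tendsto ψ atTop (𝓝 0) := by
    refine squeeze_zero' ?_ ?_ (tendsto_rpow_mul_atTop_zero_of_antitoneOn hc hnn hanti hint)
    · filter_upwards [eventually_gt_atTop 0] with s hs using hnn s hs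
    · filter_upwards [eventually_ge_atTop 1] with s hs
      exact le_mul_of_one_le_left (hnn s (zero_lt_one.trans_le hs)) (Real.one_le_rpow hs hc.le)
  have hcont0 := hcont 0 self_mem_Ici
  refine ⟨(integrableOn_Ioi_deriv_of_nonpos hcont0 hderiv hψ' hlim).neg, ?_⟩
  rw [integral_neg, integral_Ioi_of_hasDerivAt_of_nonpos hcont0 hderiv hψ' hlim, zero_sub, neg_neg]

lemma pos_of_integral_rpow_mul_pos (hanti : AntitoneOn ψ (Ici 0))
    (hpos : 0 < ∫ s in Ioi 0, s ^ c * ψ s) : 0 < ψ 0 := by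
  by_contra! hψ0
  refine hpos.not_ge (setIntegral_nonpos measurableSet_Ioi fun s (hs : 0 < s) => ?_)
  exact mul_nonpos_of_nonneg_of_nonpos (by positivity)
    ((hanti self_mem_Ici hs.le hs.le).trans hψ0)

end DecreasingProfile

section Parameters

variable {b P t : ℝ}

lemma mul_rpow_rpow_div_mul_rpow (hb : b ≠ 0) (hP : 0 < P) (ht : 0 ≤ t) (x y : ℝ) :
    (P * t ^ b) ^ (x / b) * P ^ y = P ^ (x / b + y) * t ^ x := by
  rw [Real.mul_rpow hP.le (by positivity), ← Real.rpow_mul ht, mul_div_cancel₀ _ hb,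
    Real.rpow_add hP]
  ring

lemma smallness_ratio_eq (η : ℝ) (hb : b ≠ 0) (hP : 0 < P) (ht : 0 ≤ t) :
    P ^ ((2 * b + 2) / b) / (6 * b * η ^ 2 * (P * t ^ b) ^ (2 / b)) =
      P ^ 2 / (6 * b * η ^ 2 * t ^ 2) := by
  have hpow := mul_rpow_rpow_div_mul_rpow hb hP ht 2 0
  rw [Real.rpow_zero, mul_one, add_zero, Real.rpow_two] at hpow
  rw [hpow, show (2 * b + 2) / b = 2 + 2 / b by field_simp, Real.rpow_add hP, Real.rpow_two,
    mul_left_comm, mul_comm (P ^ 2), mul_div_mul_left _ _ (by positivity)]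

lemma lower_bound_eq {η e A : ℝ} (d : ℝ) (hb : 0 < b) (hη : 0 < η) (hP : 0 < P) (ht : 0 < t)
    (hA : b * A = P * t ^ b) (he : e = P ^ 2 / (6 * b * η ^ 2 * t ^ 2)) :
    (1 / (b + 4)) * (b * A) ^ ((b + 4) / b) * P ^ (-(4 / b)) +
        (1 / (3 * b * (b + 4) * η ^ 2) - d / (6 * (b + 2) ^ 2 * (b + 4) * η ^ 2)) *
          (b * A) ^ ((b + 2) / b) * P ^ ((2 * b - 2) / b) +
        (1 / (36 * b * (b + 4) * η ^ 4) - d / (36 * (b + 2) ^ 2 * (b + 4) * η ^ 4)) *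
          A * P ^ 4 =
      P * (t ^ (b + 4) * ((1 + e) * (1 + e - b / (b + 2) ^ 2 * (d * e)))) / (b + 4) := by
  have leading_power : (b * A) ^ ((b + 4) / b) * P ^ (-(4 / b)) = P * (t ^ b * t ^ 4) := by
    rw [hA, mul_rpow_rpow_div_mul_rpow hb.ne' hP ht.le,
      show (b + 4) / b + -(4 / b) = 1 by field_simp; ring, Real.rpow_one, Real.rpow_add ht,
      Real.rpow_ofNat]
  have middle_power :
      (b * A) ^ ((b + 2) / b) * P ^ ((2 * b - 2) / b) = P ^ 3 * (t ^ b * t ^ 2) := by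
    rw [hA, mul_rpow_rpow_div_mul_rpow hb.ne' hP ht.le,
      show (b + 2) / b + (2 * b - 2) / b = 3 by field_simp; ring, Real.rpow_ofNat,
      Real.rpow_add ht, Real.rpow_two]
  have hA' : A = P * t ^ b / b := by rw [← hA]; field_simp
  rw [mul_assoc (1 / (b + 4)), leading_power, mul_assoc (_ - _), middle_power, hA',
    Real.rpow_add ht, Real.rpow_ofNat, he]
  field_simp
  ring

end Parameters

theorem lemma_2_1_general {b η d A : ℝ} {ψ ψ' : ℝ → ℝ} (hb : 1 ≤ b) (hη : 0 < η)
    (hψnn : ∀ s ∈ Ioi 0, 0 ≤ ψ s) (hψcont : ContinuousOn ψ (Ici 0))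
    (hψderiv : ∀ s ∈ Ioi 0, HasDerivAt ψ (ψ' s) s) (hψ' : ∀ s ∈ Ioi 0, ψ' s ∈ Icc (-η) 0)
    (hint1 : IntegrableOn (fun s => s ^ (b - 1) * ψ s) (Ioi 0))
    (hint2 : IntegrableOn (fun s => s ^ (b + 3) * ψ s) (Ioi 0))
    (hA : A = ∫ s in Ioi 0, s ^ (b - 1) * ψ s) (hApos : 0 < A)
    (hsmall : ψ 0 ^ ((2 * b + 2) / b) / (6 * b * η ^ 2 * (b * A) ^ (2 / b)) ≤ d) :
    ∫ s in Ioi 0, s ^ (b + 3) * ψ s ≥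
      (1 / (b + 4)) * (b * A) ^ ((b + 4) / b) * ψ 0 ^ (-(4 / b)) +
        (1 / (3 * b * (b + 4) * η ^ 2) - d / (6 * (b + 2) ^ 2 * (b + 4) * η ^ 2)) *
          (b * A) ^ ((b + 2) / b) * ψ 0 ^ ((2 * b - 2) / b) +
        (1 / (36 * b * (b + 4) * η ^ 4) - d / (36 * (b + 2) ^ 2 * (b + 4) * η ^ 4)) *
          A * ψ 0 ^ 4 := by
  have hb0 : 0 < b := by linarith
  have hψ'0 : ∀ s ∈ Ioi 0, ψ' s ≤ 0 := fun s hs => (hψ' s hs).2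
  have hP : 0 < ψ 0 := pos_of_integral_rpow_mul_pos
    (antitoneOn_Ici_of_hasDerivAt_nonpos hψcont hψderiv hψ'0) (hA ▸ hApos)
  obtain ⟨hint, hmass⟩ :=
    integrableOn_and_integral_neg_deriv hb0 hψcont hψderiv hψnn hψ'0 hint1
  obtain ⟨-, hmoment⟩ :=
    integrableOn_and_integral_rpow_mul_neg_deriv hb0 hψcont hψderiv hψnn hψ'0 hint1
  obtain ⟨hint_add_four, hmoment_add_four⟩ := integrableOn_and_integral_rpow_mul_neg_deriv
    (by linarith : 0 < b + 4) hψcont hψderiv hψnn hψ'0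
    (by rwa [show b + 4 - 1 = b + 3 by ring])
  rw [← hA] at hmoment
  rw [show b + 4 - 1 = b + 3 by ring] at hmoment_add_four
  obtain ⟨t, ht, ht_pow⟩ := exists_pos_rpow_eq hb0.ne' (by positivity : 0 < b * A / ψ 0)
  have hbA : b * A = ψ 0 * t ^ b := by rw [ht_pow, mul_div_cancel₀ _ hP.ne']
  set e := ψ 0 ^ 2 / (6 * b * η ^ 2 * t ^ 2) with he
  have hed : e ≤ d := by rwa [hbA, smallness_ratio_eq η hb0.ne' hP ht.le] at hsmall
  have htwo_steps := mul_rpow_add_four_mul_le_integral hb hη ht hP he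
    (fun s hs => ⟨neg_nonneg.2 (hψ' s hs).2, neg_le.1 (hψ' s hs).1⟩) hint hint_add_four hmass
    (hmoment.trans hbA)
  rw [ge_iff_le, lower_bound_eq d hb0 hη hP ht hbA he, div_le_iff₀' (by linarith),
    ← hmoment_add_four]
  refine le_trans ?_ htwo_steps
  have he_sq : e ^ 2 ≤ d * e := by rw [pow_two]; gcongr
  gcongr

/-- Lemma 2.1 of the paper. -/
theorem lemma_2_1 (b η d : ℝ) (hb : 1 ≤ b) (hη : 0 < η) (hd : d < 1) (ψ : ℝ → ℝ)
    (hψnn : ∀ s, 0 ≤ s → 0 ≤ ψ s)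
    (hψsmooth : ContDiffOn ℝ (⊤ : ℕ∞) ψ (Ici 0))
    (hψdec : AntitoneOn ψ (Ici 0))
    (hψder : ∀ s, 0 ≤ s → -η ≤ derivWithin ψ (Ici 0) s ∧ derivWithin ψ (Ici 0) s ≤ 0)
    (hint1 : IntegrableOn (fun s => s ^ (b - 1) * ψ s) (Ioi 0))
    (hint2 : IntegrableOn (fun s => s ^ (b + 3) * ψ s) (Ioi 0))
    (A : ℝ) (hA : A = ∫ s in Ioi 0, s ^ (b - 1) * ψ s) (hApos : 0 < A)
    (hsmall : ψ 0 ^ ((2 * b + 2) / b) / (6 * b * η ^ 2 * (b * A) ^ (2 / b)) < d) :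
    ∫ s in Ioi 0, s ^ (b + 3) * ψ s ≥
      (1 / (b + 4)) * (b * A) ^ ((b + 4) / b) * ψ 0 ^ (-(4 / b)) +
        (1 / (3 * b * (b + 4) * η ^ 2) - d / (6 * (b + 2) ^ 2 * (b + 4) * η ^ 2)) *
          (b * A) ^ ((b + 2) / b) * ψ 0 ^ ((2 * b - 2) / b) +
        (1 / (36 * b * (b + 4) * η ^ 4) - d / (36 * (b + 2) ^ 2 * (b + 4) * η ^ 4)) *
          A * ψ 0 ^ 4 :=
  lemma_2_1_general hb hη (fun s hs => hψnn s (le_of_lt hs)) hψsmooth.continuousOn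
    (fun s hs => (hψsmooth.differentiableOn (by simp) s
      (Ioi_subset_Ici_self hs)).hasDerivWithinAt.hasDerivAt (Ici_mem_nhds hs))
    (fun s hs => hψder s (le_of_lt hs)) hint1 hint2 hA hApos hsmall.le
end

section
/- Let h : ℝⁿ → [0,∞) be a nonnegative bounded Lipschitz function with |∇h| ≤ τ almost everywhere, and let h* be its symmetric decreasing rearrangement, written h*(x) = g(|x|) with g : [0,∞) → [0, sup h] non-increasing. Then −τ ≤ g'(s) ≤ 0 for almost every s > 0. -/
open MeasureTheory Set

/-!
The superlevel set `{h > t - K ε}` of a `K`-Lipschitz function contains the `ε`-thickening of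
`{h > t}`. By the Brunn–Minkowski inequality a set with at least the volume of a ball of radius `s`
has an `ε`-thickening with at least the volume of the ball of radius `s + ε`. Since the radial
profile `g` records the radii of the balls with the volumes of the superlevel sets, it drops by at
most `K ε` between `s` and `s + ε`: it is `K`-Lipschitz on `(0, ∞)`. This replaces the coarea
formula by a finite difference argument. Brunn–Minkowski is obtained in its multiplicative form from
the Prékopa–Leindler inequality, which passes to products and reduces to the sumset bound
`|A| + |B| ≤ |A + B|` on the line.
-/

open Filter Metric Topology

open scoped ENNReal NNReal Pointwise

section SumsetBound

lemma volume_add_volume_le_volume_add_of_isCompact {A B : Set ℝ} (hA : IsCompact A)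
    (hB : IsCompact B) (hA₀ : A.Nonempty) (hB₀ : B.Nonempty) :
    volume A + volume B ≤ volume (A + B) := by
  -- Translate `A` to the left of `sSup A + sInf B` and `B` to the right of it.
  have hdisj : AEDisjoint volume (sInf B +ᵥ A) (sSup A +ᵥ B) := by
    refine measure_mono_null (t := {sSup A + sInf B}) ?_ Real.volume_singleton
    rintro _ ⟨⟨x, hx, rfl⟩, y, hy, hxy⟩
    have hx' : x ≤ sSup A := le_csSup hA.bddAbove hx
    have hy' : sInf B ≤ y := csInf_le hB.bddBelow hy
    simp only [vadd_eq_add, mem_singleton_iff] at hxy ⊢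
    linarith
  have hsub : (sInf B +ᵥ A) ∪ (sSup A +ᵥ B) ⊆ A + B := by
    rintro _ (⟨x, hx, rfl⟩ | ⟨y, hy, rfl⟩)
    · exact ⟨x, hx, sInf B, hB.sInf_mem hB₀, add_comm _ _⟩
    · exact ⟨sSup A, hA.sSup_mem hA₀, y, hy, rfl⟩
  calc volume A + volume B = volume (sInf B +ᵥ A) + volume (sSup A +ᵥ B) := by
        simp only [measure_vadd]
    _ = volume ((sInf B +ᵥ A) ∪ (sSup A +ᵥ B)) :=
        (measure_union₀ (hB.measurableSet.const_vadd _).nullMeasurableSet hdisj).symm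
    _ ≤ volume (A + B) := measure_mono hsub

lemma volume_add_volume_le_volume_add {A B : Set ℝ} (hA : MeasurableSet A) (hB : MeasurableSet B)
    (hA₀ : A.Nonempty) (hB₀ : B.Nonempty) : volume A + volume B ≤ volume (A + B) := by
  obtain ⟨a, ha⟩ := hA₀
  obtain ⟨b, hb⟩ := hB₀
  rw [hA.measure_eq_iSup_isCompact, hB.measure_eq_iSup_isCompact]
  simp only [iSup_and']
  refine ENNReal.biSup_add_biSup_le' ⟨∅, empty_subset _, isCompact_empty⟩
    ⟨∅, empty_subset _, isCompact_empty⟩ fun K ⟨hKA, hK⟩ L ⟨hLB, hL⟩ ↦ ?_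
  calc volume K + volume L ≤ volume (insert a K) + volume (insert b L) := by
        gcongr <;> exact subset_insert _ _
    _ ≤ volume (insert a K + insert b L) :=
        volume_add_volume_le_volume_add_of_isCompact (hK.insert a) (hL.insert b)
          (insert_nonempty _ _) (insert_nonempty _ _)
    _ ≤ volume (A + B) := by
        gcongr
        · exact insert_subset ha hKA
        · exact insert_subset hb hLB

lemma ofReal_mul_volume_add_ofReal_mul_volume_le {a b : ℝ} (ha : 0 < a) (hb : 0 < b) {A B : Set ℝ}
    (hA : MeasurableSet A) (hB : MeasurableSet B) (hA₀ : A.Nonempty) (hB₀ : B.Nonempty) :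
    ENNReal.ofReal a * volume A + ENNReal.ofReal b * volume B ≤ volume (a • A + b • B) := by
  simpa [Measure.addHaar_smul, abs_of_pos ha, abs_of_pos hb] using
    volume_add_volume_le_volume_add (hA.const_smul₀ a) (hB.const_smul₀ b)
      hA₀.smul_set hB₀.smul_set

end SumsetBound

section LayerCake

lemma volume_restrict_Ioi_setOf_ofReal_lt (c : ℝ≥0∞) :
    volume.restrict (Ioi 0) {t : ℝ | ENNReal.ofReal t < c} = c := by
  rw [Measure.restrict_apply (measurableSet_lt ENNReal.measurable_ofReal measurable_const)]
  induction c with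
  | top => simp
  | coe c =>
    have hIoo : {t : ℝ | ENNReal.ofReal t < c} ∩ Ioi 0 = Ioo 0 (c : ℝ) := by
      ext t
      simp only [mem_inter_iff, mem_ofPred_eq, mem_Ioi, mem_Ioo, and_comm (a := 0 < t)]
      refine and_congr_left fun ht ↦ ?_
      rw [ENNReal.ofReal_lt_iff_lt_toReal ht.le ENNReal.coe_ne_top, ENNReal.coe_toReal]
    simp [hIoo]

lemma lintegral_eq_lintegral_measure_ofReal_lt {α : Type*} [MeasurableSpace α] {μ : Measure α}
    [SFinite μ] {f : α → ℝ≥0∞} (hf : Measurable f) :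
    ∫⁻ x, f x ∂μ = ∫⁻ t in Ioi (0 : ℝ), μ {x | ENNReal.ofReal t < f x} := by
  have hS : MeasurableSet {p : α × ℝ | ENNReal.ofReal p.2 < f p.1} :=
    measurableSet_lt (ENNReal.measurable_ofReal.comp measurable_snd) (hf.comp measurable_fst)
  calc ∫⁻ x, f x ∂μ
      = ∫⁻ x, volume.restrict (Ioi 0) {t : ℝ | ENNReal.ofReal t < f x} ∂μ := by
        simp only [volume_restrict_Ioi_setOf_ofReal_lt]
    _ = μ.prod (volume.restrict (Ioi 0)) {p : α × ℝ | ENNReal.ofReal p.2 < f p.1} :=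
        (Measure.prod_apply hS).symm
    _ = ∫⁻ t in Ioi (0 : ℝ), μ {x | ENNReal.ofReal t < f x} := Measure.prod_apply_symm hS

end LayerCake

section WeightedMeans

variable {a b : ℝ}

lemma rpow_mul_rpow_le_ofReal_mul_add_ofReal_mul (ha : 0 < a) (hb : 0 < b) (hab : a + b = 1)
    (x y : ℝ≥0∞) : x ^ a * y ^ b ≤ ENNReal.ofReal a * x + ENNReal.ofReal b * y := by
  induction x with
  | top => simp [ENNReal.mul_top, ha]
  | coe x =>
    induction y with
    | top => simp [ENNReal.mul_top, hb]
    | coe y =>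
      lift a to ℝ≥0 using ha.le
      lift b to ℝ≥0 using hb.le
      rw [← ENNReal.coe_rpow_of_nonneg _ ha.le, ← ENNReal.coe_rpow_of_nonneg _ hb.le,
        ENNReal.ofReal_coe_nnreal, ENNReal.ofReal_coe_nnreal]
      exact_mod_cast NNReal.geom_mean_le_arith_mean2_weighted a b x y (by exact_mod_cast hab)

lemma rpow_mul_rpow_self (ha : 0 ≤ a) (hb : 0 ≤ b) (hab : a + b = 1) (x : ℝ≥0∞) :
    x ^ a * x ^ b = x := by
  rw [← ENNReal.rpow_add_of_nonneg _ _ ha hb, hab, ENNReal.rpow_one]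

lemma min_le_rpow_mul_rpow (ha : 0 ≤ a) (hb : 0 ≤ b) (hab : a + b = 1) (x y : ℝ≥0∞) :
    min x y ≤ x ^ a * y ^ b :=
  calc min x y = min x y ^ a * min x y ^ b := (rpow_mul_rpow_self ha hb hab _).symm
    _ ≤ x ^ a * y ^ b := by
      gcongr
      · exact min_le_left x y
      · exact min_le_right x y

lemma mul_rpow_mul_mul_rpow (ha : 0 ≤ a) (hb : 0 ≤ b) (c d x y : ℝ≥0∞) :
    (c * x) ^ a * (d * y) ^ b = c ^ a * d ^ b * (x ^ a * y ^ b) := by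
  rw [ENNReal.mul_rpow_of_nonneg _ _ ha, ENNReal.mul_rpow_of_nonneg _ _ hb, mul_mul_mul_comm]

end WeightedMeans

section PrekopaLeindlerLine

variable {a b : ℝ} {f g h : ℝ → ℝ≥0∞}

-- Equal suprema make the superlevel sets of `f` and `g` nonempty for the same heights.
lemma ofReal_mul_lintegral_add_ofReal_mul_lintegral_le_of_iSup_eq (ha : 0 < a) (hb : 0 < b)
    (hf : Measurable f) (hg : Measurable g) (hh : Measurable h) (hfg : ⨆ x, f x = ⨆ x, g x)
    (H : ∀ x y, min (f x) (g y) ≤ h (a * x + b * y)) :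
    ENNReal.ofReal a * (∫⁻ x, f x) + ENNReal.ofReal b * (∫⁻ x, g x) ≤ ∫⁻ x, h x := by
  have hmeas (u : ℝ → ℝ≥0∞) : Measurable fun t : ℝ ↦ volume {x | ENNReal.ofReal t < u x} :=
    Antitone.measurable fun s t hst ↦ measure_mono fun x hx ↦
      (ENNReal.ofReal_le_ofReal hst).trans_lt hx
  rw [lintegral_eq_lintegral_measure_ofReal_lt hf, lintegral_eq_lintegral_measure_ofReal_lt hg,
    lintegral_eq_lintegral_measure_ofReal_lt hh, ← lintegral_const_mul _ (hmeas f),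
    ← lintegral_const_mul _ (hmeas g), ← lintegral_add_left ((hmeas f).const_mul _)]
  refine lintegral_mono fun t ↦ ?_
  rcases lt_or_ge (ENNReal.ofReal t) (⨆ x, f x) with ht | ht
  · refine (ofReal_mul_volume_add_ofReal_mul_volume_le ha hb (measurableSet_lt measurable_const hf)
      (measurableSet_lt measurable_const hg) (lt_iSup_iff.1 ht)
      (lt_iSup_iff.1 (ht.trans_eq hfg))).trans (measure_mono ?_)
    rintro _ ⟨_, ⟨x, hx, rfl⟩, _, ⟨y, hy, rfl⟩, rfl⟩
    exact (lt_min hx hy).trans_le (H x y)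
  · have hf_empty : {x | ENNReal.ofReal t < f x} = ∅ :=
      eq_empty_of_forall_notMem fun x ↦ ((le_iSup f x).trans ht).not_gt
    have hg_empty : {x | ENNReal.ofReal t < g x} = ∅ :=
      eq_empty_of_forall_notMem fun x ↦ ((le_iSup g x).trans (hfg.ge.trans ht)).not_gt
    simp [hf_empty, hg_empty]

lemma lintegral_rpow_mul_lintegral_rpow_le_of_iSup_ne_top (ha : 0 < a) (hb : 0 < b)
    (hab : a + b = 1) (hf : Measurable f) (hg : Measurable g) (hh : Measurable h)
    (hf_top : ⨆ x, f x ≠ ∞) (hg_top : ⨆ x, g x ≠ ∞)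
    (H : ∀ x y, f x ^ a * g y ^ b ≤ h (a * x + b * y)) :
    (∫⁻ x, f x) ^ a * (∫⁻ x, g x) ^ b ≤ ∫⁻ x, h x := by
  rcases eq_or_ne (⨆ x, f x) 0 with hf₀ | hf₀
  · have hf_zero : ∀ x, f x = 0 := by simpa using hf₀
    simp [hf_zero, ha]
  rcases eq_or_ne (⨆ x, g x) 0 with hg₀ | hg₀
  · have hg_zero : ∀ x, g x = 0 := by simpa using hg₀
    simp [hg_zero, hb]
  -- Rescale so that both suprema become `1`.
  set c := (⨆ x, f x)⁻¹ with hc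
  set d := (⨆ x, g x)⁻¹ with hd
  have hscale₀ : c ^ a * d ^ b ≠ 0 := mul_ne_zero
    (by simp [ENNReal.rpow_eq_zero_iff, hc, hf₀, hf_top])
    (by simp [ENNReal.rpow_eq_zero_iff, hd, hg₀, hg_top])
  have hscale_top : c ^ a * d ^ b ≠ ∞ := ENNReal.mul_ne_top
    (ENNReal.rpow_ne_top_of_nonneg ha.le (ENNReal.inv_ne_top.2 hf₀))
    (ENNReal.rpow_ne_top_of_nonneg hb.le (ENNReal.inv_ne_top.2 hg₀))
  have hsup : ⨆ x, c * f x = ⨆ x, d * g x := by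
    rw [← ENNReal.mul_iSup, ← ENNReal.mul_iSup, ENNReal.inv_mul_cancel hf₀ hf_top,
      ENNReal.inv_mul_cancel hg₀ hg_top]
  refine (ENNReal.mul_le_mul_iff_right hscale₀ hscale_top).1 ?_
  calc c ^ a * d ^ b * ((∫⁻ x, f x) ^ a * (∫⁻ x, g x) ^ b)
      = (∫⁻ x, c * f x) ^ a * (∫⁻ x, d * g x) ^ b := by
        rw [lintegral_const_mul _ hf, lintegral_const_mul _ hg, mul_rpow_mul_mul_rpow ha.le hb.le]
    _ ≤ ENNReal.ofReal a * (∫⁻ x, c * f x) + ENNReal.ofReal b * (∫⁻ x, d * g x) :=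
        rpow_mul_rpow_le_ofReal_mul_add_ofReal_mul ha hb hab _ _
    _ ≤ ∫⁻ x, c ^ a * d ^ b * h x :=
        ofReal_mul_lintegral_add_ofReal_mul_lintegral_le_of_iSup_eq ha hb (hf.const_mul c)
          (hg.const_mul d) (hh.const_mul _) hsup fun x y ↦ by
            refine (min_le_rpow_mul_rpow ha.le hb.le hab _ _).trans ?_
            rw [mul_rpow_mul_mul_rpow ha.le hb.le]
            gcongr
            exact H x y
    _ = c ^ a * d ^ b * ∫⁻ x, h x := lintegral_const_mul _ hh

lemma lintegral_eq_iSup_lintegral_min_natCast {α : Type*} [MeasurableSpace α] {μ : Measure α}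
    {u : α → ℝ≥0∞} (hu : Measurable u) :
    ∫⁻ x, u x ∂μ = ⨆ n : ℕ, ∫⁻ x, min (u x) n ∂μ := by
  rw [← lintegral_iSup (fun n ↦ hu.min measurable_const)
    fun m n hmn x ↦ min_le_min_left _ (Nat.cast_le.2 hmn)]
  simp [← inf_iSup_eq, ENNReal.iSup_natCast]

lemma lintegral_rpow_mul_lintegral_rpow_le (ha : 0 < a) (hb : 0 < b) (hab : a + b = 1)
    (hf : Measurable f) (hg : Measurable g) (hh : Measurable h)
    (H : ∀ x y, f x ^ a * g y ^ b ≤ h (a * x + b * y)) :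
    (∫⁻ x, f x) ^ a * (∫⁻ x, g x) ^ b ≤ ∫⁻ x, h x := by
  have hrpow {p : ℝ} (hp : 0 < p) (u : ℕ → ℝ≥0∞) : (⨆ n, u n) ^ p = ⨆ n, u n ^ p :=
    (ENNReal.orderIsoRpow p hp).map_iSup u
  have hmin (u : ℝ → ℝ≥0∞) (n : ℕ) : ⨆ x, min (u x) n ≠ ∞ :=
    ne_top_of_le_ne_top (ENNReal.natCast_ne_top n) (iSup_le fun x ↦ min_le_right _ _)
  rw [lintegral_eq_iSup_lintegral_min_natCast hf, lintegral_eq_iSup_lintegral_min_natCast hg,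
    hrpow ha, hrpow hb, ENNReal.iSup_mul]
  simp only [ENNReal.mul_iSup]
  refine iSup₂_le fun m n ↦ ?_
  refine lintegral_rpow_mul_lintegral_rpow_le_of_iSup_ne_top ha hb hab (hf.min measurable_const)
    (hg.min measurable_const) hh (hmin f m) (hmin g n) fun x y ↦ le_trans ?_ (H x y)
  gcongr <;> exact min_le_left _ _

end PrekopaLeindlerLine

section PrekopaLeindler

variable {E F : Type*} [AddCommMonoid E] [Module ℝ E] [MeasurableSpace E]
  [AddCommMonoid F] [Module ℝ F] [MeasurableSpace F]

/-- The Prékopa–Leindler inequality for integrals against `μ`, in which it is stable under products,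
linear images and scaling. Functions take values in `ℝ≥0∞`, so no integrability is required. -/
def SatisfiesPrekopaLeindler (μ : Measure E) : Prop :=
  ∀ ⦃a b : ℝ⦄, 0 < a → 0 < b → a + b = 1 → ∀ ⦃f g h : E → ℝ≥0∞⦄,
    Measurable f → Measurable g → Measurable h →
    (∀ x y, f x ^ a * g y ^ b ≤ h (a • x + b • y)) →
    (∫⁻ x, f x ∂μ) ^ a * (∫⁻ x, g x ∂μ) ^ b ≤ ∫⁻ x, h x ∂μ

namespace SatisfiesPrekopaLeindler

lemma volume_real : SatisfiesPrekopaLeindler (volume : Measure ℝ) :=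
  fun _ _ ha hb hab _ _ _ ↦ lintegral_rpow_mul_lintegral_rpow_le ha hb hab

lemma dirac (z : E) : SatisfiesPrekopaLeindler (Measure.dirac z) := by
  intro a b _ _ hab f g h hf hg hh H
  rw [lintegral_dirac' z hf, lintegral_dirac' z hg, lintegral_dirac' z hh]
  simpa [← add_smul, hab] using H z z

lemma smul {μ : Measure E} (hμ : SatisfiesPrekopaLeindler μ) (c : ℝ≥0∞) :
    SatisfiesPrekopaLeindler (c • μ) := by
  intro a b ha hb hab f g h hf hg hh H
  simp only [lintegral_smul_measure, smul_eq_mul]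
  rw [mul_rpow_mul_mul_rpow ha.le hb.le, rpow_mul_rpow_self ha.le hb.le hab]
  gcongr
  exact hμ ha hb hab hf hg hh H

lemma map {μ : Measure E} (hμ : SatisfiesPrekopaLeindler μ) {T : E → F} (hT : IsLinearMap ℝ T)
    (hT_meas : Measurable T) : SatisfiesPrekopaLeindler (μ.map T) := by
  intro a b ha hb hab f g h hf hg hh H
  rw [lintegral_map hf hT_meas, lintegral_map hg hT_meas, lintegral_map hh hT_meas]
  refine hμ ha hb hab (hf.comp hT_meas) (hg.comp hT_meas) (hh.comp hT_meas) fun x y ↦ ?_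
  simpa only [hT.map_add, hT.map_smul] using H (T x) (T y)

lemma prod {μ : Measure E} {ν : Measure F} [SFinite ν] (hμ : SatisfiesPrekopaLeindler μ)
    (hν : SatisfiesPrekopaLeindler ν) : SatisfiesPrekopaLeindler (μ.prod ν) := by
  intro a b ha hb hab f g h hf hg hh H
  rw [lintegral_prod _ hf.aemeasurable, lintegral_prod _ hg.aemeasurable,
    lintegral_prod _ hh.aemeasurable]
  exact hμ ha hb hab hf.lintegral_prod_right' hg.lintegral_prod_right' hh.lintegral_prod_right'
    fun x y ↦ hν ha hb hab (hf.comp measurable_prodMk_left) (hg.comp measurable_prodMk_left)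
      (hh.comp measurable_prodMk_left) fun u v ↦ H (x, u) (y, v)

lemma volume_pi (n : ℕ) : SatisfiesPrekopaLeindler (volume : Measure (Fin n → ℝ)) := by
  induction n with
  | zero =>
    rw [Measure.volume_pi_eq_dirac 0]
    exact dirac 0
  | succ n ih =>
    have hvol := (volume_preserving_piFinSuccAbove (fun _ : Fin (n + 1) ↦ ℝ) 0).symm
    have hcons : ⇑(MeasurableEquiv.piFinSuccAbove (fun _ : Fin (n + 1) ↦ ℝ) 0).symm =
        Fin.consLinearEquiv ℝ fun _ ↦ ℝ :=
      funext fun p ↦ Fin.insertNth_zero' p.1 p.2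
    rw [← hvol.map_eq]
    refine (volume_real.prod ih).map ?_ hvol.measurable
    exact hcons ▸ (Fin.consLinearEquiv ℝ fun _ ↦ ℝ).toLinearMap.isLinear

lemma measure_rpow_mul_measure_rpow_le {μ : Measure E} (hμ : SatisfiesPrekopaLeindler μ) {a b : ℝ}
    (ha : 0 < a) (hb : 0 < b) (hab : a + b = 1) {A B C : Set E} (hA : MeasurableSet A)
    (hB : MeasurableSet B) (hC : MeasurableSet C) (hABC : a • A + b • B ⊆ C) :
    μ A ^ a * μ B ^ b ≤ μ C := by
  rw [← lintegral_indicator_one hA, ← lintegral_indicator_one hB, ← lintegral_indicator_one hC]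
  refine hμ ha hb hab (measurable_one.indicator hA) (measurable_one.indicator hB)
    (measurable_one.indicator hC) fun x y ↦ ?_
  by_cases hxy : x ∈ A ∧ y ∈ B
  · have hC_mem := hABC (add_mem_add (smul_mem_smul_set hxy.1) (smul_mem_smul_set hxy.2))
    simp [hxy.1, hxy.2, hC_mem]
  · rcases not_and_or.1 hxy with hx | hy
    · simp [hx, ha]
    · simp [hy, hb]

end SatisfiesPrekopaLeindler

end PrekopaLeindler

section HaarMeasure

variable {E : Type*} [NormedAddCommGroup E] [NormedSpace ℝ E] [FiniteDimensional ℝ E]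
  [MeasurableSpace E] [BorelSpace E] (μ : Measure E) [μ.IsAddHaarMeasure]

lemma satisfiesPrekopaLeindler_of_isAddHaarMeasure : SatisfiesPrekopaLeindler μ := by
  let e : (Fin (Module.finrank ℝ E) → ℝ) ≃L[ℝ] E := .ofFinrankEq (Module.finrank_fin_fun ℝ)
  rw [Measure.isAddLeftInvariant_eq_smul μ (volume.map e)]
  exact ((SatisfiesPrekopaLeindler.volume_pi _).map e.toLinearMap.isLinear
    e.continuous.measurable).smul _

lemma addHaar_ball_lt_addHaar_ball [Nontrivial E] (x : E) {r R : ℝ} (hr : 0 ≤ r) (hrR : r < R) :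
    μ (ball x r) < μ (ball x R) := by
  rw [μ.addHaar_ball x hr, μ.addHaar_ball x (hr.trans hrR.le)]
  have hpow : r ^ Module.finrank ℝ E < R ^ Module.finrank ℝ E :=
    pow_lt_pow_left₀ hrR hr Module.finrank_pos.ne'
  exact ENNReal.mul_lt_mul_left (measure_ball_pos μ 0 one_pos).ne' measure_ball_lt_top.ne
    ((ENNReal.ofReal_lt_ofReal_iff_of_nonneg (by positivity)).2 hpow)

lemma addHaar_ball_add_le_addHaar_thickening {A : Set E} (hA : MeasurableSet A) {s ε : ℝ}
    (hs : 0 < s) (hε : 0 < ε) (hsA : μ (ball 0 s) ≤ μ A) :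
    μ (ball 0 (s + ε)) ≤ μ (thickening ε A) := by
  set a := s / (s + ε) with ha_def
  set b := ε / (s + ε) with hb_def
  have ha : 0 < a := by positivity
  have hb : 0 < b := by positivity
  have hab : a + b = 1 := by rw [ha_def, hb_def]; field_simp
  have hdilate : μ (ball 0 (s + ε)) ≤ μ (a⁻¹ • A) := by
    have hradius : s + ε = a⁻¹ * s := by rw [ha_def]; field_simp
    rw [hradius, μ.addHaar_ball_mul_of_pos 0 (inv_pos.2 ha), μ.addHaar_smul,
      abs_of_pos (by positivity)]
    gcongr
  have hsum : a • a⁻¹ • A + b • ball (0 : E) (s + ε) ⊆ thickening ε A := by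
    have hball : b • ball (0 : E) (s + ε) = ball 0 ε := by
      rw [_root_.smul_ball hb.ne', smul_zero, Real.norm_of_nonneg hb.le, hb_def,
        div_mul_cancel₀ _ (by positivity)]
    rw [smul_inv_smul₀ ha.ne', hball, add_ball_zero]
  calc μ (ball 0 (s + ε)) = μ (ball 0 (s + ε)) ^ a * μ (ball 0 (s + ε)) ^ b :=
        (rpow_mul_rpow_self ha.le hb.le hab _).symm
    _ ≤ μ (a⁻¹ • A) ^ a * μ (ball 0 (s + ε)) ^ b := by gcongr
    _ ≤ μ (thickening ε A) :=
        (satisfiesPrekopaLeindler_of_isAddHaarMeasure μ).measure_rpow_mul_measure_rpow_le ha hb hab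
          (hA.const_smul₀ _) measurableSet_ball isOpen_thickening.measurableSet hsum

end HaarMeasure

lemma thickening_setOf_lt_subset_of_lipschitzWith {α : Type*} [PseudoMetricSpace α] {K : ℝ≥0}
    {h : α → ℝ} (hh : LipschitzWith K h) (t ε : ℝ) :
    thickening ε {x | t < h x} ⊆ {x | t - K * ε < h x} := by
  intro y hy
  obtain ⟨x, hx, hyx⟩ := mem_thickening_iff.1 hy
  have hdist : h x ≤ h y + K * dist x y := hh.le_add_mul x y
  have hK : K * dist x y ≤ K * ε := by
    rw [dist_comm]
    gcongr
  simp only [mem_ofPred_eq] at hx ⊢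
  linarith

section RearrangementProfile

variable {E : Type*} [NormedAddCommGroup E] [MeasurableSpace E] {μ : Measure E} {h : E → ℝ}
  {g : ℝ → ℝ} {K : ℝ≥0} {r s t : ℝ}

/-- `g` is the profile on `[0, ∞)` of the symmetric decreasing rearrangement `x ↦ g ‖x‖` of `h`.
Values of `g` at negative arguments are unconstrained, and so is the choice of `g` at its jumps;
only the positive heights enter the condition that `h` and its rearrangement be equidistributed. -/
structure IsRearrangementProfile (μ : Measure E) (h : E → ℝ) (g : ℝ → ℝ) : Prop where
  antitoneOn : AntitoneOn g (Ici 0)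
  nonneg : ∀ s, 0 ≤ s → 0 ≤ g s
  measure_lt_eq : ∀ t, 0 < t → μ {x | t < h x} = μ {x | t < g ‖x‖}

namespace IsRearrangementProfile

lemma measure_ball_le (hg : IsRearrangementProfile μ h g) (hs : 0 ≤ s) (ht : 0 < t)
    (hts : t < g s) : μ (ball 0 s) ≤ μ {x | t < h x} := by
  rw [hg.measure_lt_eq t ht]
  refine measure_mono fun x hx ↦ hts.trans_le ?_
  exact hg.antitoneOn (norm_nonneg x) hs (mem_ball_zero_iff.1 hx).le

lemma measure_le_measure_ball (hg : IsRearrangementProfile μ h g) (hr : 0 ≤ r) (ht : 0 < t)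
    (hrt : g r ≤ t) : μ {x | t < h x} ≤ μ (ball 0 r) := by
  rw [hg.measure_lt_eq t ht]
  refine measure_mono fun x hx ↦ mem_ball_zero_iff.2 ?_
  by_contra! hrx
  exact (hg.antitoneOn hr (norm_nonneg x) hrx).not_gt (hrt.trans_lt hx)

variable [NormedSpace ℝ E] [FiniteDimensional ℝ E] [Nontrivial E] [BorelSpace E]
  [μ.IsAddHaarMeasure]

lemma apply_le_apply_add_mul_of_lt_add (hg : IsRearrangementProfile μ h g)
    (hh : LipschitzWith K h) (hs : 0 < s) (hr : 0 ≤ r) {ε : ℝ} (hε : 0 < ε) (hrs : r < s + ε) :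
    g s ≤ g r + K * ε := by
  by_contra! hlt
  obtain ⟨t, hrt, hts⟩ := exists_between hlt
  have hgr : 0 ≤ g r := hg.nonneg r hr
  have hKε : 0 ≤ K * ε := by positivity
  refine (addHaar_ball_lt_addHaar_ball μ 0 hr hrs).not_ge ?_
  calc μ (ball 0 (s + ε)) ≤ μ (thickening ε {x | t < h x}) :=
        addHaar_ball_add_le_addHaar_thickening μ
          (measurableSet_lt measurable_const hh.continuous.measurable) hs hε
          (hg.measure_ball_le hs.le (by linarith) hts)
    _ ≤ μ {x | t - K * ε < h x} := measure_mono (thickening_setOf_lt_subset_of_lipschitzWith hh t ε)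
    _ ≤ μ (ball 0 r) := hg.measure_le_measure_ball hr (by linarith) (by linarith)

lemma apply_le_apply_add_mul_sub (hg : IsRearrangementProfile μ h g) (hh : LipschitzWith K h)
    (hs : 0 < s) (hsr : s ≤ r) : g s ≤ g r + K * (r - s) := by
  have hlim : Tendsto (fun ε : ℝ ↦ g r + K * ε) (𝓝[>] (r - s)) (𝓝 (g r + K * (r - s))) :=
    (Continuous.tendsto (by fun_prop) _).mono_left nhdsWithin_le_nhds
  refine ge_of_tendsto hlim (eventually_mem_nhdsWithin.mono fun ε hε ↦ ?_)
  have hε' : r - s < ε := hε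
  exact hg.apply_le_apply_add_mul_of_lt_add hh hs (by linarith) (by linarith) (by linarith)

lemma lipschitzOnWith (hg : IsRearrangementProfile μ h g) (hh : LipschitzWith K h) :
    LipschitzOnWith K g (Ioi 0) := by
  refine LipschitzOnWith.of_le_add_mul K fun s hs r hr ↦ ?_
  rcases le_total s r with hsr | hrs
  · rw [dist_comm, Real.dist_eq, abs_of_nonneg (sub_nonneg.2 hsr)]
    exact hg.apply_le_apply_add_mul_sub hh hs hsr
  · exact (hg.antitoneOn (mem_Ioi.1 hr).le (mem_Ioi.1 hs).le hrs).trans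
      (le_add_of_nonneg_right (by positivity))

lemma neg_le_deriv (hg : IsRearrangementProfile μ h g) (hh : LipschitzWith K h) (hs : 0 < s) :
    -K ≤ deriv g s :=
  (abs_le.1 (norm_deriv_le_of_lipschitzOn (Ioi_mem_nhds hs) (hg.lipschitzOnWith hh))).1

end IsRearrangementProfile

lemma deriv_nonpos_of_antitoneOn {S : Set ℝ} (hg : AntitoneOn g S) (hs : S ∈ 𝓝 s) :
    deriv g s ≤ 0 :=
  derivWithin_of_mem_nhds (f := g) hs ▸ hg.derivWithin_nonpos

end RearrangementProfile

theorem rearrangement_profile_deriv_bound_general {E : Type*} [NormedAddCommGroup E]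
    [NormedSpace ℝ E] [FiniteDimensional ℝ E] [Nontrivial E] [MeasurableSpace E] [BorelSpace E]
    {μ : Measure E} [μ.IsAddHaarMeasure] {K : ℝ≥0} {h : E → ℝ} (hh : LipschitzWith K h)
    {g : ℝ → ℝ} (hg : IsRearrangementProfile μ h g) :
    ∀ᵐ s : ℝ, 0 < s → DifferentiableAt ℝ g s ∧ -K ≤ deriv g s ∧ deriv g s ≤ 0 := by
  filter_upwards [(hg.lipschitzOnWith hh).ae_differentiableWithinAt_of_mem] with s hdiff hs
  exact ⟨(hdiff hs).differentiableAt (Ioi_mem_nhds hs), hg.neg_le_deriv hh hs,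
    deriv_nonpos_of_antitoneOn hg.antitoneOn (Ici_mem_nhds hs)⟩

/-- Derivative bound (2.4) for the radial profile of the symmetric decreasing
rearrangement of a Lipschitz function. -/
theorem rearrangement_profile_deriv_bound (n : ℕ) (hn : 1 ≤ n) (τ : ℝ) (hτ : 0 ≤ τ)
    (h : EuclideanSpace ℝ (Fin n) → ℝ) (hnn : ∀ x, 0 ≤ h x)
    (hbdd : BddAbove (Set.range h)) (hlip : LipschitzWith (Real.toNNReal τ) h)
    (g : ℝ → ℝ) (hg : Antitone g) (hgnn : ∀ s, 0 ≤ g s)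
    (hgsup : ∀ s, g s ≤ ⨆ x, h x)
    (hequi : ∀ t, 0 < t →
      volume {x | t < h x} = volume {x : EuclideanSpace ℝ (Fin n) | t < g ‖x‖}) :
    ∀ᵐ s : ℝ, 0 < s → -τ ≤ deriv g s ∧ deriv g s ≤ 0 := by
  have : NeZero n := ⟨Nat.one_le_iff_ne_zero.1 hn⟩
  have hprofile : IsRearrangementProfile volume h g :=
    ⟨hg.antitoneOn _, fun s _ ↦ hgnn s, hequi⟩
  filter_upwards [rearrangement_profile_deriv_bound_general hlip hprofile] with s hbound hs
  simpa only [Real.coe_toNNReal τ hτ] using (hbound hs).2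
end
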